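/- Let (X,T) be a topological dynamical system with a compatible metric d. Then for every T-invariant Borel probability measure μ, the lower L¹ rate distortion dimension is bounded by the lower Rényi information dimension: liminf_{ε→0} R_{μ,1}(ε)/log(1/ε) ≤ liminf_{ε→0} (1/log(1/ε)) · inf{ h_μ(T,P) : P a finite Borel partition of X with diam P ≤ ε }. -/

import Mathlib

open Filter MeasureTheory Set
open scoped ENNReal Topology

noncomputable section

namespace MMD

variable {X : Type*}

/-- The `n`-th Bowen metric `d_n(x,y) = max_{0 ≤ j ≤ n-1} d(T^j x, T^j y)`. -/
noncomputable def bowenDist [PseudoMetricSpace X] (T : X → X) (n : ℕ) (x y : X) : ℝ :=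
  ⨆ j : Fin n, dist (T^[(j : ℕ)] x) (T^[(j : ℕ)] y)

/-- `r_n(T,d,ε,Z)`: minimal cardinality of an `(n,ε)`-spanning set of `Z`. -/
noncomputable def spanNum [PseudoMetricSpace X] (T : X → X) (n : ℕ) (ε : ℝ) (Z : Set X) : ℕ :=
  sInf {k | ∃ E : Finset X, E.card = k ∧ ∀ z ∈ Z, ∃ y ∈ E, bowenDist T n z y < ε}

/-- `s_n(T,d,ε,Z)`: maximal cardinality of an `(n,ε)`-separated subset of `Z`. -/
noncomputable def sepNum [PseudoMetricSpace X] (T : X → X) (n : ℕ) (ε : ℝ) (Z : Set X) : ℕ :=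
  sSup {k | ∃ F : Finset X, ↑F ⊆ Z ∧ F.card = k ∧
    ∀ x ∈ F, ∀ y ∈ F, x ≠ y → ε ≤ bowenDist T n x y}

/-- `limsup_{n→∞} (1/n) log r_n(T,d,ε,X)`. -/
noncomputable def spanGrowth [PseudoMetricSpace X] (T : X → X) (ε : ℝ) : ℝ≥0∞ :=
  Filter.limsup (fun n : ℕ => ENNReal.ofReal (Real.log (spanNum T n ε Set.univ)) / (n : ℝ≥0∞))
    Filter.atTop

/-- Upper metric mean dimension. -/
noncomputable def mdimMUpper [PseudoMetricSpace X] (T : X → X) : ℝ≥0∞ :=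
  Filter.limsup (fun ε : ℝ => spanGrowth T ε / ENNReal.ofReal (Real.log (1 / ε)))
    (nhdsWithin 0 (Set.Ioi 0))

/-- Lower metric mean dimension. -/
noncomputable def mdimMLower [PseudoMetricSpace X] (T : X → X) : ℝ≥0∞ :=
  Filter.liminf (fun ε : ℝ => spanGrowth T ε / ENNReal.ofReal (Real.log (1 / ε)))
    (nhdsWithin 0 (Set.Ioi 0))

/-- A finite (Borel) partition given as a finite set of measurable, pairwise disjoint sets
covering the space. -/
def IsFinPartition {Y : Type*} [MeasurableSpace Y] (P : Finset (Set Y)) : Prop :=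
  (∀ s ∈ P, MeasurableSet s) ∧ (∀ s ∈ P, ∀ t ∈ P, s ≠ t → Disjoint s t) ∧
    ⋃₀ (P : Set (Set Y)) = Set.univ

/-- Mutual information `I(ξ;η)` of two random variables, as the supremum over finite
measurable partitions of the target spaces. -/
noncomputable def mutualInfo {Ω A B : Type*} [MeasurableSpace Ω] [MeasurableSpace A]
    [MeasurableSpace B] (P : Measure Ω) (ξ : Ω → A) (η : Ω → B) : ℝ≥0∞ :=
  ⨆ (p : Finset (Set A)) (_ : IsFinPartition p) (q : Finset (Set B)) (_ : IsFinPartition q),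
    ENNReal.ofReal (∑ s ∈ p, ∑ t ∈ q,
      (P (ξ ⁻¹' s ∩ η ⁻¹' t)).toReal *
        Real.log ((P (ξ ⁻¹' s ∩ η ⁻¹' t)).toReal /
          ((P (ξ ⁻¹' s)).toReal * (P (η ⁻¹' t)).toReal)))

/-- The `L^∞` rate distortion function `R_{μ,L∞}(ε,s)`: the infimum of `I(ξ;η)/n` over all
`n ≥ 1` and all joint distributions `ν` of `(ξ, (η_0,…,η_{n-1}))` such that `ξ` has law `μ`,
the `η_k` take (almost surely) finitely many values, and
`E(#{0 ≤ k ≤ n-1 : d(T^k ξ, η_k) ≥ ε}) < s n`. -/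
noncomputable def RDistLInftyS [PseudoMetricSpace X] [MeasurableSpace X] (T : X → X)
    (μ : Measure X) (ε s : ℝ) : ℝ≥0∞ :=
  ⨅ (n : ℕ) (_ : 0 < n) (ν : Measure (X × (Fin n → X))) (_ : IsProbabilityMeasure ν)
    (_ : ν.map Prod.fst = μ) (_ : ∃ S : Finset X, ν {p | ∀ k, p.2 k ∈ S} = 1)
    (_ : ∫⁻ p, (Nat.card {k : Fin n // ε ≤ dist (T^[(k : ℕ)] p.1) (p.2 k)} : ℝ≥0∞) ∂ν
        < ENNReal.ofReal (s * n)),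
    mutualInfo ν Prod.fst Prod.snd / (n : ℝ≥0∞)

/-- `R_{μ,L∞}(ε) = lim_{s→0} R_{μ,L∞}(ε,s)` (the limit equals the supremum over `s > 0`
by monotonicity). -/
noncomputable def RDistLInfty [PseudoMetricSpace X] [MeasurableSpace X] (T : X → X)
    (μ : Measure X) (ε : ℝ) : ℝ≥0∞ :=
  ⨆ (s : ℝ) (_ : 0 < s), RDistLInftyS T μ ε s

/-- The `L¹` rate distortion function `R_{μ,1}(ε)`. -/
noncomputable def RDistL1 [PseudoMetricSpace X] [MeasurableSpace X] (T : X → X)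
    (μ : Measure X) (ε : ℝ) : ℝ≥0∞ :=
  ⨅ (n : ℕ) (_ : 0 < n) (ν : Measure (X × (Fin n → X))) (_ : IsProbabilityMeasure ν)
    (_ : ν.map Prod.fst = μ) (_ : ∃ S : Finset X, ν {p | ∀ k, p.2 k ∈ S} = 1)
    (_ : ∫⁻ p, ∑ k : Fin n, ENNReal.ofReal (dist (T^[(k : ℕ)] p.1) (p.2 k)) ∂ν
        < ENNReal.ofReal (ε * n)),
    mutualInfo ν Prod.fst Prod.snd / (n : ℝ≥0∞)

/-- `R^δ_μ(T,n,ε)`: minimal number of Bowen `(n,ε)`-balls whose union has `μ`-measure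
greater than `1 - δ`. -/
noncomputable def katokNum [PseudoMetricSpace X] [MeasurableSpace X] (T : X → X)
    (μ : Measure X) (n : ℕ) (ε δ : ℝ) : ℕ :=
  sInf {k | ∃ E : Finset X, E.card = k ∧
    ENNReal.ofReal (1 - δ) < μ (⋃ x ∈ E, {y | bowenDist T n x y < ε})}

/-- `h̄^K_μ(T,ε,δ)`. -/
noncomputable def katokUpperD [PseudoMetricSpace X] [MeasurableSpace X] (T : X → X)
    (μ : Measure X) (ε δ : ℝ) : ℝ≥0∞ :=
  Filter.limsup (fun n : ℕ => ENNReal.ofReal (Real.log (katokNum T μ n ε δ)) / (n : ℝ≥0∞))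
    Filter.atTop

/-- `ḥ^K_μ(T,ε,δ)`. -/
noncomputable def katokLowerD [PseudoMetricSpace X] [MeasurableSpace X] (T : X → X)
    (μ : Measure X) (ε δ : ℝ) : ℝ≥0∞ :=
  Filter.liminf (fun n : ℕ => ENNReal.ofReal (Real.log (katokNum T μ n ε δ)) / (n : ℝ≥0∞))
    Filter.atTop

/-- `h̄^K_μ(T,ε) = lim_{δ→0} h̄^K_μ(T,ε,δ)` (equal to the supremum over `δ ∈ (0,1)` by
monotonicity). -/
noncomputable def katokUpper [PseudoMetricSpace X] [MeasurableSpace X] (T : X → X)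
    (μ : Measure X) (ε : ℝ) : ℝ≥0∞ :=
  ⨆ (δ : ℝ) (_ : δ ∈ Set.Ioo (0 : ℝ) 1), katokUpperD T μ ε δ

/-- `ḥ^K_μ(T,ε) = lim_{δ→0} ḥ^K_μ(T,ε,δ)`. -/
noncomputable def katokLower [PseudoMetricSpace X] [MeasurableSpace X] (T : X → X)
    (μ : Measure X) (ε : ℝ) : ℝ≥0∞ :=
  ⨆ (δ : ℝ) (_ : δ ∈ Set.Ioo (0 : ℝ) 1), katokLowerD T μ ε δ

/-- The empirical measure `(1/n) Σ_{j=0}^{n-1} δ_{T^j x}`. -/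
noncomputable def empMeas [MeasurableSpace X] (T : X → X) (n : ℕ) (x : X) : Measure X :=
  (n : ℝ≥0∞)⁻¹ • ∑ j ∈ Finset.range n, Measure.dirac (T^[j] x)

/-- Pfister–Sullivan entropy `PS_μ(T,d,ε)`: infimum over weak* open neighborhoods `F` of `μ`
of `limsup_n (1/n) log s_n(T,d,ε,X_{n,F})`, where
`X_{n,F} = {x : (1/n) Σ_{j<n} δ_{T^j x} ∈ F}`. -/
noncomputable def PSent [MetricSpace X] [MeasurableSpace X] [OpensMeasurableSpace X]
    (T : X → X) (μ : ProbabilityMeasure X) (ε : ℝ) : ℝ≥0∞ :=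
  ⨅ (F : Set (ProbabilityMeasure X)) (_ : IsOpen F) (_ : μ ∈ F),
    Filter.limsup (fun n : ℕ => ENNReal.ofReal (Real.log (sepNum T n ε
      {x : X | ∃ h : IsProbabilityMeasure (empMeas T n x),
        (⟨empMeas T n x, h⟩ : ProbabilityMeasure X) ∈ F})) / (n : ℝ≥0∞)) Filter.atTop

/-- Partition entropy `H_μ(P) = Σ_{A∈P} -μ(A) log μ(A)`. -/
noncomputable def entP [MeasurableSpace X] (μ : Measure X) (P : Finset (Set X)) : ℝ≥0∞ :=
  ∑ A ∈ P, ENNReal.ofReal (-((μ A).toReal * Real.log ((μ A).toReal)))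

/-- The join `P^n = ∨_{j=0}^{n-1} T^{-j} P`. -/
noncomputable def joinN (T : X → X) (P : Finset (Set X)) (n : ℕ) : Finset (Set X) :=
  letI : DecidableEq (Set X) := Classical.decEq _
  (Fintype.piFinset (fun _ : Fin n => P)).image (fun f => ⋂ j : Fin n, T^[(j : ℕ)] ⁻¹' f j)

/-- `h_μ(T,P) = lim_n H_μ(P^n)/n` (the limit exists and equals the liminf). -/
noncomputable def entRate [MeasurableSpace X] (T : X → X) (μ : Measure X)
    (P : Finset (Set X)) : ℝ≥0∞ :=
  Filter.liminf (fun n : ℕ => entP μ (joinN T P n) / (n : ℝ≥0∞)) Filter.atTop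

/-- `inf { h_μ(T,P) : P a finite Borel partition with diam P ≤ ε }`. -/
noncomputable def infEntRate [PseudoMetricSpace X] [MeasurableSpace X] (T : X → X)
    (μ : Measure X) (ε : ℝ) : ℝ≥0∞ :=
  ⨅ (P : Finset (Set X)) (_ : IsFinPartition P) (_ : ∀ s ∈ P, Metric.diam s ≤ ε),
    entRate T μ P

/-- Kolmogorov–Sinai entropy `h_μ(T)`. -/
noncomputable def ksEntropy [MeasurableSpace X] (T : X → X) (μ : Measure X) : ℝ≥0∞ :=
  ⨆ (P : Finset (Set X)) (_ : IsFinPartition P), entRate T μ P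

/-- A finite open cover. -/
def IsFinOpenCover [TopologicalSpace X] (α : Finset (Set X)) : Prop :=
  (∀ A ∈ α, IsOpen A) ∧ ⋃₀ (α : Set (Set X)) = Set.univ

/-- `ord(β) = max_x #{B ∈ β : x ∈ B} - 1`. -/
noncomputable def ordCover (β : Finset (Set X)) : ℕ :=
  sSup {k | ∃ x : X, Nat.card {B : Set X // B ∈ β ∧ x ∈ B} = k} - 1

/-- `D(α) = min_{β ≻ α} ord(β)`, over finite open covers `β` refining `α`. -/
noncomputable def Dcover [TopologicalSpace X] (α : Finset (Set X)) : ℕ :=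
  sInf {k | ∃ β : Finset (Set X), IsFinOpenCover β ∧ (∀ B ∈ β, ∃ A ∈ α, B ⊆ A) ∧
    ordCover β = k}

/-- Mean (topological) dimension `mdim(X,T) = sup_α lim_n D(α^n)/n`. -/
noncomputable def mdimTop [TopologicalSpace X] (T : X → X) : ℝ≥0∞ :=
  ⨆ (α : Finset (Set X)) (_ : IsFinOpenCover α),
    Filter.liminf (fun n : ℕ => (Dcover (joinN T α n) : ℝ≥0∞) / (n : ℝ≥0∞)) Filter.atTop

/-- The marker property for a homeomorphism. -/
def MarkerProperty [TopologicalSpace X] (T : X ≃ₜ X) : Prop :=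
  ∀ N : ℕ, 0 < N → ∃ U : Set X, IsOpen U ∧
    (∀ n : ℕ, 1 ≤ n → n ≤ N → U ∩ (⇑T)^[n] '' U = ∅) ∧
    ⋃ n : ℤ, ⇑(T.toEquiv ^ n) '' U = Set.univ

/-- Upper dimension `limsup_{ε→0} F(μ,ε)/log(1/ε)` associated with a candidate `F`. -/
noncomputable def dimFUpper [MeasurableSpace X] (F : Measure X → ℝ → ℝ≥0∞)
    (μ : Measure X) : ℝ≥0∞ :=
  Filter.limsup (fun ε : ℝ => F μ ε / ENNReal.ofReal (Real.log (1 / ε)))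
    (nhdsWithin 0 (Set.Ioi 0))

/-- Lower dimension `liminf_{ε→0} F(μ,ε)/log(1/ε)` associated with a candidate `F`. -/
noncomputable def dimFLower [MeasurableSpace X] (F : Measure X → ℝ → ℝ≥0∞)
    (μ : Measure X) : ℝ≥0∞ :=
  Filter.liminf (fun ε : ℝ => F μ ε / ENNReal.ofReal (Real.log (1 / ε)))
    (nhdsWithin 0 (Set.Ioi 0))

/-- A candidate function: for each invariant probability measure `μ`, `F(μ,·)` is
non-decreasing as `ε` decreases, and `F(μ,ε) → h_μ(T)` as `ε → 0⁺`. -/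
def IsCandidate [MeasurableSpace X] (T : X → X) (F : Measure X → ℝ → ℝ≥0∞) : Prop :=
  ∀ μ : Measure X, IsProbabilityMeasure μ → MeasurePreserving T μ μ →
    (∀ ε₁ ε₂ : ℝ, 0 < ε₁ → ε₁ ≤ ε₂ → F μ ε₂ ≤ F μ ε₁) ∧
    Filter.Tendsto (F μ) (nhdsWithin 0 (Set.Ioi 0)) (nhds (ksEntropy T μ))

end MMD

open MMD

/-!
Replace each point by a chosen representative of its `P`-cell, where `P` is a finite partition of
mesh at most `ε`, and let `η` be the first `n` terms of the resulting orbit. This codes the orbit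
with error at most `ε` at each time, and `η` is a function of the cell of `P^n`, so
`I(ξ; η) ≤ H_μ(η) ≤ H_μ(P^n)`. Hence `R_{μ,1}(ε') ≤ h_μ(T, P)` for all `ε' > ε`: the inequality in
the definition of `R_{μ,1}` is strict, so `ε' = ε` is out of reach. Since `log (1 / ε)` is
continuous, this shift of the scale disappears in the lower limits.
-/

namespace MMD

section RealInequalities

variable {ι : Type*}

theorem mul_neg_log_le_mul_neg_log {x y : ℝ} (hx : 0 ≤ x) (hxy : x ≤ y) :
    x * -Real.log y ≤ x * -Real.log x := by
  rcases hx.eq_or_lt with rfl | hx'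
  · simp
  · gcongr

theorem negMulLog_sum_le (s : Finset ι) {a : ι → ℝ} (ha : ∀ i ∈ s, 0 ≤ a i) :
    Real.negMulLog (∑ i ∈ s, a i) ≤ ∑ i ∈ s, Real.negMulLog (a i) := by
  calc Real.negMulLog (∑ i ∈ s, a i)
      = ∑ i ∈ s, a i * -Real.log (∑ j ∈ s, a j) := by rw [← Finset.sum_mul, Real.negMulLog]; ring
    _ ≤ ∑ i ∈ s, a i * -Real.log (a i) := Finset.sum_le_sum fun i hi =>
        mul_neg_log_le_mul_neg_log (ha i hi) (Finset.single_le_sum ha hi)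
    _ = ∑ i ∈ s, Real.negMulLog (a i) := by simp only [Real.negMulLog, mul_neg, neg_mul]

theorem mul_log_div_mul_le {a b c : ℝ} (ha : 0 ≤ a) (hab : a ≤ b) (hac : a ≤ c) :
    a * Real.log (a / (b * c)) ≤ a * -Real.log c := by
  rcases ha.eq_or_lt with rfl | ha'
  · simp
  · have hb : 0 < b := ha'.trans_le hab
    have hc : 0 < c := ha'.trans_le hac
    rw [← Real.log_inv]
    gcongr
    calc a / (b * c) ≤ b / (b * c) := by gcongr
      _ = c⁻¹ := by field_simp

theorem ofReal_sum_le_sum_ofReal (s : Finset ι) (a : ι → ℝ) :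
    ENNReal.ofReal (∑ i ∈ s, a i) ≤ ∑ i ∈ s, ENNReal.ofReal (a i) :=
  Finset.le_sum_of_subadditive _ ENNReal.ofReal_zero.le (fun _ _ => ENNReal.ofReal_add_le) s a

end RealInequalities

section Partitions

variable {Y Z : Type*}

/-- The cell `P(x)`, i.e. the member of the partition `P` that contains `x`. As a union it is
defined for every `P`; see `IsFinPartition.cell_eq`. A random variable `f` is a function of the
partition when `f.FactorsThrough (cell P)`. -/
def cell (P : Finset (Set Y)) (x : Y) : Set Y :=
  ⋃₀ {s | s ∈ P ∧ x ∈ s}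

/-- The choice of a representative in each cell of `P`: the point selected in the cell of `x`. -/
def cellRep (P : Finset (Set Y)) (x : Y) : Y :=
  rangeSplitting (cell P) ⟨cell P x, mem_range_self x⟩

theorem cell_cellRep (P : Finset (Set Y)) (x : Y) : cell P (cellRep P x) = cell P x :=
  apply_rangeSplitting (cell P) _

theorem cellRep_factorsThrough (P : Finset (Set Y)) : (cellRep P).FactorsThrough (cell P) :=
  fun _ _ hxy => congrArg (rangeSplitting (cell P)) (Subtype.ext hxy)

variable [MeasurableSpace Y]

namespace IsFinPartition

variable {P : Finset (Set Y)}

theorem cell_eq (hP : IsFinPartition P) {s : Set Y} {x : Y} (hs : s ∈ P) (hx : x ∈ s) :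
    cell P x = s := by
  have h_unique : {t | t ∈ P ∧ x ∈ t} = {s} := by
    ext t
    refine ⟨fun ⟨ht, hxt⟩ => ?_, fun hts => hts ▸ ⟨hs, hx⟩⟩
    by_contra hne
    exact disjoint_left.1 (hP.2.1 t ht s hs hne) hxt hx
  rw [cell, h_unique, sUnion_singleton]

theorem exists_mem (hP : IsFinPartition P) (x : Y) : ∃ s ∈ P, x ∈ s :=
  mem_sUnion.1 (hP.2.2 ▸ mem_univ x)

theorem cell_mem (hP : IsFinPartition P) (x : Y) : cell P x ∈ P := by
  obtain ⟨s, hs, hx⟩ := hP.exists_mem x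
  rwa [hP.cell_eq hs hx]

theorem mem_cell (hP : IsFinPartition P) (x : Y) : x ∈ cell P x := by
  obtain ⟨s, hs, hx⟩ := hP.exists_mem x
  rwa [hP.cell_eq hs hx]

theorem cellRep_mem_cell (hP : IsFinPartition P) (x : Y) : cellRep P x ∈ cell P x :=
  cell_cellRep P x ▸ hP.mem_cell (cellRep P x)

theorem finite_range_of_factorsThrough {β : Type*} (hP : IsFinPartition P) {f : Y → β}
    (hf : f.FactorsThrough (cell P)) : (range f).Finite := by
  have h_cells : (range (cell P)).Finite :=
    P.finite_toSet.subset (range_subset_iff.2 hP.cell_mem)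
  rcases isEmpty_or_nonempty Y with _ | ⟨⟨y⟩⟩
  · exact finite_range f
  · have : Nonempty β := ⟨f y⟩
    rw [← hf.extend_comp (fun _ => f y), range_comp]
    exact h_cells.image _

theorem measurable_of_factorsThrough [MeasurableSpace Z] (hP : IsFinPartition P) {f : Y → Z}
    (hf : f.FactorsThrough (cell P)) : Measurable f := by
  classical
  intro U _
  have h_union : f ⁻¹' U = ⋃ s ∈ P.filter (· ⊆ f ⁻¹' U), s := by
    ext x
    simp only [mem_iUnion, Finset.mem_filter, exists_prop]
    refine ⟨fun hx => ⟨cell P x, ⟨hP.cell_mem x, fun y hy => ?_⟩, hP.mem_cell x⟩,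
      fun ⟨_, ⟨_, hsU⟩, hxs⟩ => hsU hxs⟩
    rwa [mem_preimage, hf (hP.cell_eq (hP.cell_mem x) hy)]
  rw [h_union]
  exact Finset.measurableSet_biUnion _ fun s hs => hP.1 s (Finset.mem_filter.1 hs).1

theorem sum_measureReal (hP : IsFinPartition P) (μ : Measure Y) [IsFiniteMeasure μ] :
    ∑ s ∈ P, μ.real s = μ.real univ := by
  rw [← hP.2.2, sUnion_eq_biUnion]
  exact (measureReal_biUnion_finset hP.2.1 hP.1).symm

theorem sum_measureReal_preimage_inter [MeasurableSpace Z] (hP : IsFinPartition P)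
    (μ : Measure Z) [IsFiniteMeasure μ] {f : Z → Y} (hf : Measurable f) (B : Set Z) :
    ∑ s ∈ P, μ.real (f ⁻¹' s ∩ B) = μ.real B := by
  have h_law (s : Set Y) (hs : MeasurableSet s) :
      ((μ.restrict B).map f).real s = μ.real (f ⁻¹' s ∩ B) := by
    rw [map_measureReal_apply hf hs, measureReal_restrict_apply (hf hs)]
  calc ∑ s ∈ P, μ.real (f ⁻¹' s ∩ B)
      = ∑ s ∈ P, ((μ.restrict B).map f).real s :=
        Finset.sum_congr rfl fun s hs => (h_law s (hP.1 s hs)).symm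
    _ = μ.real B := by rw [hP.sum_measureReal, h_law _ .univ, preimage_univ, univ_inter]

theorem sum_preimage_inter_of_cell_eq {M : Type*} [AddCommMonoid M] (hP : IsFinPartition P)
    {A : Set Z} {f : Z → Y} (hA : ∀ x ∈ A, ∀ y ∈ A, cell P (f x) = cell P (f y))
    {F : Set Z → M} (hF : F ∅ = 0) : ∑ s ∈ P, F (f ⁻¹' s ∩ A) = F A := by
  rcases A.eq_empty_or_nonempty with rfl | ⟨x, hx⟩
  · simp [hF]
  have h_mem {s : Set Y} (hs : s ∈ P) {y : Z} (hy : y ∈ A) :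
      f y ∈ s ↔ s = cell P (f x) := by
    rw [hA x hx y hy]
    exact ⟨fun hys => (hP.cell_eq hs hys).symm, fun h => h ▸ hP.mem_cell (f y)⟩
  rw [Finset.sum_eq_single_of_mem (cell P (f x)) (hP.cell_mem _)]
  · have hA_sub : A ⊆ f ⁻¹' cell P (f x) := fun y hy => (h_mem (hP.cell_mem _) hy).2 rfl
    rw [inter_eq_right.2 hA_sub]
  · intro s hs hne
    rw [disjoint_iff_inter_eq_empty.1, hF]
    exact disjoint_right.2 fun y hy hys => hne ((h_mem hs hy).1 hys)

end IsFinPartition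

end Partitions

section Join

variable {Y : Type*} {P : Finset (Set Y)} {T : Y → Y} {n : ℕ}

theorem mem_joinN {A : Set Y} :
    A ∈ joinN T P n ↔
      ∃ f : Fin n → Set Y, (∀ j, f j ∈ P) ∧ ⋂ j : Fin n, T^[(j : ℕ)] ⁻¹' f j = A := by
  simp [joinN]

variable [MeasurableSpace Y]

theorem IsFinPartition.joinN (hP : IsFinPartition P) (hT : Measurable T) (n : ℕ) :
    IsFinPartition (joinN T P n) := by
  refine ⟨fun A hA => ?_, fun A hA B hB hAB => ?_, eq_univ_of_forall fun x => ?_⟩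
  · obtain ⟨f, hf, rfl⟩ := mem_joinN.1 hA
    exact .iInter fun j => hT.iterate j (hP.1 _ (hf j))
  · obtain ⟨f, hf, rfl⟩ := mem_joinN.1 hA
    obtain ⟨g, hg, rfl⟩ := mem_joinN.1 hB
    refine disjoint_left.2 fun x hxf hxg => hAB ?_
    have hfg : f = g := funext fun j =>
      (hP.cell_eq (hf j) (mem_iInter.1 hxf j)).symm.trans (hP.cell_eq (hg j) (mem_iInter.1 hxg j))
    rw [hfg]
  · exact mem_sUnion.2 ⟨_, mem_joinN.2 ⟨_, fun j => hP.cell_mem (T^[(j : ℕ)] x), rfl⟩,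
      mem_iInter.2 fun j => hP.mem_cell _⟩

theorem IsFinPartition.cell_iterate_factorsThrough (hP : IsFinPartition P) (hT : Measurable T)
    (j : Fin n) :
    (fun x => cell P (T^[(j : ℕ)] x)).FactorsThrough (cell (MMD.joinN T P n)) := by
  intro x y hxy
  have hJ := hP.joinN hT n
  obtain ⟨f, hf, h_cell⟩ := mem_joinN.1 (hJ.cell_mem x)
  have h_itinerary {z : Y} (hz : z ∈ cell (MMD.joinN T P n) x) : cell P (T^[(j : ℕ)] z) = f j := by
    rw [← h_cell] at hz
    exact hP.cell_eq (hf j) (mem_iInter.1 hz j)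
  exact (h_itinerary (hJ.mem_cell x)).trans (h_itinerary (hxy ▸ hJ.mem_cell y)).symm

end Join

section Information

variable {Ω Ω' A B : Type*} [MeasurableSpace Ω] [MeasurableSpace Ω'] [MeasurableSpace A]

theorem sum_mul_log_div_le_sum_negMulLog {μ : Measure Ω} [IsFiniteMeasure μ] {ξ : Ω → A}
    (hξ : Measurable ξ) (η : Ω → B) {p : Finset (Set A)} (hp : IsFinPartition p)
    (q : Finset (Set B)) :
    ∑ s ∈ p, ∑ t ∈ q, μ.real (ξ ⁻¹' s ∩ η ⁻¹' t) *
        Real.log (μ.real (ξ ⁻¹' s ∩ η ⁻¹' t) / (μ.real (ξ ⁻¹' s) * μ.real (η ⁻¹' t)))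
      ≤ ∑ t ∈ q, Real.negMulLog (μ.real (η ⁻¹' t)) := by
  calc _ ≤ ∑ s ∈ p, ∑ t ∈ q, μ.real (ξ ⁻¹' s ∩ η ⁻¹' t) * -Real.log (μ.real (η ⁻¹' t)) :=
        Finset.sum_le_sum fun s _ => Finset.sum_le_sum fun t _ => mul_log_div_mul_le
          measureReal_nonneg (measureReal_mono inter_subset_left)
          (measureReal_mono inter_subset_right)
    _ = ∑ t ∈ q, (∑ s ∈ p, μ.real (ξ ⁻¹' s ∩ η ⁻¹' t)) * -Real.log (μ.real (η ⁻¹' t)) := by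
        simp only [Finset.sum_mul]
        exact Finset.sum_comm
    _ = ∑ t ∈ q, Real.negMulLog (μ.real (η ⁻¹' t)) := by
        simp only [hp.sum_measureReal_preimage_inter μ hξ, Real.negMulLog, mul_neg, neg_mul]

variable [MeasurableSpace B]

theorem entP_eq_sum_negMulLog (μ : Measure Ω) (P : Finset (Set Ω)) :
    entP μ P = ∑ s ∈ P, ENNReal.ofReal (Real.negMulLog (μ.real s)) := by
  simp only [entP, Real.negMulLog_eq_neg, measureReal_def]

theorem entP_map_le_of_factorsThrough {μ : Measure Ω} [IsFiniteMeasure μ] {J : Finset (Set Ω)}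
    {q : Finset (Set B)} {η : Ω → B} (hJ : IsFinPartition J) (hq : IsFinPartition q)
    (hη : Measurable η) (hηJ : (cell q ∘ η).FactorsThrough (cell J)) :
    entP (μ.map η) q ≤ entP μ J := by
  simp only [entP_eq_sum_negMulLog]
  calc ∑ t ∈ q, ENNReal.ofReal (Real.negMulLog ((μ.map η).real t))
      = ∑ t ∈ q, ENNReal.ofReal (Real.negMulLog (∑ s ∈ J, μ.real (η ⁻¹' t ∩ s))) :=
        Finset.sum_congr rfl fun t ht => by
          simp only [map_measureReal_apply hη (hq.1 t ht), inter_comm (η ⁻¹' t)]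
          simp only [← hJ.sum_measureReal_preimage_inter μ measurable_id (η ⁻¹' t), preimage_id]
    _ ≤ ∑ t ∈ q, ∑ s ∈ J, ENNReal.ofReal (Real.negMulLog (μ.real (η ⁻¹' t ∩ s))) :=
        Finset.sum_le_sum fun t _ =>
          (ENNReal.ofReal_le_ofReal (negMulLog_sum_le J fun _ _ => measureReal_nonneg)).trans
            (ofReal_sum_le_sum_ofReal J _)
    _ = ∑ s ∈ J, ∑ t ∈ q, ENNReal.ofReal (Real.negMulLog (μ.real (η ⁻¹' t ∩ s))) :=
        Finset.sum_comm
    _ = ∑ s ∈ J, ENNReal.ofReal (Real.negMulLog (μ.real s)) :=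
        Finset.sum_congr rfl fun s hs => hq.sum_preimage_inter_of_cell_eq
          (F := fun C => ENNReal.ofReal (Real.negMulLog (μ.real C)))
          (fun x hx y hy => hηJ ((hJ.cell_eq hs hx).trans (hJ.cell_eq hs hy).symm)) (by simp)

theorem mutualInfo_le_iSup_entP_map {μ : Measure Ω} [IsFiniteMeasure μ] {ξ : Ω → A} {η : Ω → B}
    (hξ : Measurable ξ) (hη : Measurable η) :
    mutualInfo μ ξ η ≤ ⨆ (q : Finset (Set B)) (_ : IsFinPartition q), entP (μ.map η) q := by
  refine iSup₂_le fun p hp => iSup₂_le fun q hq => le_iSup₂_of_le q hq ?_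
  calc _ ≤ ENNReal.ofReal (∑ t ∈ q, Real.negMulLog (μ.real (η ⁻¹' t))) :=
        ENNReal.ofReal_le_ofReal (sum_mul_log_div_le_sum_negMulLog hξ η hp q)
    _ ≤ ∑ t ∈ q, ENNReal.ofReal (Real.negMulLog (μ.real (η ⁻¹' t))) :=
        ofReal_sum_le_sum_ofReal q _
    _ = entP (μ.map η) q := by
        rw [entP_eq_sum_negMulLog]
        exact Finset.sum_congr rfl fun t ht => by rw [map_measureReal_apply hη (hq.1 t ht)]

theorem mutualInfo_le_entP {μ : Measure Ω} [IsFiniteMeasure μ] {ξ : Ω → A} {η : Ω → B}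
    (hξ : Measurable ξ) {J : Finset (Set Ω)} (hJ : IsFinPartition J)
    (hηJ : η.FactorsThrough (cell J)) : mutualInfo μ ξ η ≤ entP μ J := by
  have hη : Measurable η := hJ.measurable_of_factorsThrough hηJ
  exact (mutualInfo_le_iSup_entP_map hξ hη).trans <| iSup₂_le fun q hq =>
    entP_map_le_of_factorsThrough hJ hq hη fun _ _ hxy => congrArg (cell q) (hηJ hxy)

theorem mutualInfo_map {μ : Measure Ω'} {f : Ω' → Ω} (hf : Measurable f) {ξ : Ω → A} {η : Ω → B}
    (hξ : Measurable ξ) (hη : Measurable η) :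
    mutualInfo (μ.map f) ξ η = mutualInfo μ (ξ ∘ f) (η ∘ f) := by
  refine biSup_congr fun p hp => biSup_congr fun q hq => ?_
  congr 1
  refine Finset.sum_congr rfl fun s hs => Finset.sum_congr rfl fun t ht => ?_
  have hξs := hξ (hp.1 s hs)
  have hηt := hη (hq.1 t ht)
  simp only [Measure.map_apply hf (hξs.inter hηt), Measure.map_apply hf hξs,
    Measure.map_apply hf hηt, preimage_inter, preimage_comp]

end Information

section RateDistortion

variable {X : Type*} [PseudoMetricSpace X] [MeasurableSpace X] {T : X → X} {μ : Measure X}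
  [IsProbabilityMeasure μ] {ε ε' : ℝ} {n : ℕ}

theorem RDistL1_le_mutualInfo_div (hn : 0 < n) {η : X → Fin n → X} (hη : Measurable η)
    {S : Finset X} (hS : ∀ x (k : Fin n), η x k ∈ S)
    (h_dist : ∫⁻ x, ∑ k : Fin n, ENNReal.ofReal (dist (T^[(k : ℕ)] x) (η x k)) ∂μ
      < ENNReal.ofReal (ε * n)) :
    RDistL1 T μ ε ≤ mutualInfo μ id η / n := by
  have h_graph : Measurable fun x => (x, η x) := measurable_id.prodMk hη
  set ν : Measure (X × (Fin n → X)) := μ.map fun x => (x, η x)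
  have hν : IsProbabilityMeasure ν := Measure.isProbabilityMeasure_map h_graph.aemeasurable
  have hν_fst : ν.map Prod.fst = μ :=
    (Measure.map_map measurable_fst h_graph).trans Measure.map_id
  have hν_finite : ν {p | ∀ k, p.2 k ∈ S} = 1 := by
    refine le_antisymm prob_le_one ?_
    calc 1 = μ ((fun x => (x, η x)) ⁻¹' {p | ∀ k, p.2 k ∈ S}) := by simp [hS]
      _ ≤ ν {p | ∀ k, p.2 k ∈ S} := Measure.le_map_apply h_graph.aemeasurable _
  have hν_dist : ∫⁻ p, ∑ k : Fin n, ENNReal.ofReal (dist (T^[(k : ℕ)] p.1) (p.2 k)) ∂ν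
      < ENNReal.ofReal (ε * n) := (lintegral_map_le _ _).trans_lt h_dist
  calc RDistL1 T μ ε ≤ mutualInfo ν Prod.fst Prod.snd / n :=
        iInf₂_le_of_le n hn <| iInf₂_le_of_le ν hν <| iInf₂_le_of_le hν_fst ⟨S, hν_finite⟩ <|
          iInf_le _ hν_dist
    _ = mutualInfo μ id η / n := by
        rw [mutualInfo_map h_graph measurable_fst measurable_snd]
        rfl

theorem lintegral_sum_dist_lt (hε : 0 ≤ ε) (hεε' : ε < ε') (hn : 0 < n) {η : X → Fin n → X}
    (hη : ∀ x (k : Fin n), dist (T^[(k : ℕ)] x) (η x k) ≤ ε) :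
    ∫⁻ x, ∑ k : Fin n, ENNReal.ofReal (dist (T^[(k : ℕ)] x) (η x k)) ∂μ
      < ENNReal.ofReal (ε' * n) := by
  have hn' : (0 : ℝ) < n := Nat.cast_pos.2 hn
  calc ∫⁻ x, ∑ k : Fin n, ENNReal.ofReal (dist (T^[(k : ℕ)] x) (η x k)) ∂μ
      ≤ ∫⁻ _, ∑ _k : Fin n, ENNReal.ofReal ε ∂μ := by gcongr; exact hη _ _
    _ = ENNReal.ofReal (ε * n) := by simp [ENNReal.ofReal_mul hε, mul_comm]
    _ < ENNReal.ofReal (ε' * n) := by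
        rw [ENNReal.ofReal_lt_ofReal_iff (mul_pos (hε.trans_lt hεε') hn')]
        gcongr

variable [BoundedSpace X]

theorem IsFinPartition.dist_cellRep_le {P : Finset (Set X)} (hP : IsFinPartition P)
    (h_diam : ∀ s ∈ P, Metric.diam s ≤ ε) (x : X) : dist x (cellRep P x) ≤ ε :=
  (Metric.dist_le_diam_of_mem (Bornology.IsBounded.all _) (hP.mem_cell x)
    (hP.cellRep_mem_cell x)).trans (h_diam _ (hP.cell_mem x))

theorem RDistL1_le_entP_joinN_div (hT : Measurable T) (hε : 0 ≤ ε) (hεε' : ε < ε')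
    {P : Finset (Set X)} (hP : IsFinPartition P) (h_diam : ∀ s ∈ P, Metric.diam s ≤ ε)
    (hn : 0 < n) : RDistL1 T μ ε' ≤ entP μ (joinN T P n) / n := by
  let η : X → Fin n → X := fun x k => cellRep P (T^[(k : ℕ)] x)
  have hJ : IsFinPartition (joinN T P n) := hP.joinN hT n
  have hηJ : η.FactorsThrough (cell (joinN T P n)) := fun x y hxy => funext fun k =>
    cellRep_factorsThrough P (hP.cell_iterate_factorsThrough hT k hxy)
  have h_finite : (range (cellRep P)).Finite :=
    hP.finite_range_of_factorsThrough (cellRep_factorsThrough P)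
  calc RDistL1 T μ ε' ≤ mutualInfo μ id η / n :=
        RDistL1_le_mutualInfo_div hn (hJ.measurable_of_factorsThrough hηJ)
          (fun x k => h_finite.mem_toFinset.2 (mem_range_self (T^[(k : ℕ)] x)))
          (lintegral_sum_dist_lt hε hεε' hn fun _ _ => hP.dist_cellRep_le h_diam _)
    _ ≤ entP μ (joinN T P n) / n := by
        gcongr
        exact mutualInfo_le_entP measurable_id hJ hηJ

theorem RDistL1_le_infEntRate (hT : Measurable T) (hε : 0 ≤ ε) (hεε' : ε < ε') :
    RDistL1 T μ ε' ≤ infEntRate T μ ε := by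
  refine le_iInf₂ fun P hP => le_iInf fun h_diam => le_liminf_of_le (by isBoundedDefault) ?_
  filter_upwards [eventually_gt_atTop 0] with n hn
  exact RDistL1_le_entP_joinN_div hT hε hεε' hP h_diam hn

end RateDistortion

theorem liminf_nhdsGT_div_le {α : Type*} [Preorder α] [TopologicalSpace α]
    [∀ x : α, (𝓝[>] x).NeBot] {a : α} {F G φ : α → ℝ≥0∞}
    (hFG : ∀ x, a < x → ∀ y, x < y → F y ≤ G x)
    (hφ : ContinuousOn φ (Ioi a)) (hφ_top : ∀ x, a < x → φ x ≠ ∞) :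
    liminf (fun x => F x / φ x) (𝓝[>] a) ≤ liminf (fun x => G x / φ x) (𝓝[>] a) := by
  refine (le_liminf_iff' (by isBoundedDefault) (by isBoundedDefault)).2 fun c hc => ?_
  filter_upwards [eventually_eventually_nhdsWithin.2 (eventually_lt_of_lt_liminf hc),
    self_mem_nhdsWithin] with x hcx (hx : a < x)
  have h_mono : 𝓝[>] x ≤ 𝓝[Ioi a] x := nhdsWithin_mono x (Ioi_subset_Ioi hx.le)
  have h_lim : Tendsto (fun y => G x / φ y) (𝓝[>] x) (𝓝 (G x / φ x)) :=
    ENNReal.Tendsto.const_div ((hφ x hx).mono_left h_mono) (.inl (hφ_top x hx))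
  refine ge_of_tendsto h_lim ?_
  filter_upwards [h_mono hcx, self_mem_nhdsWithin] with y hcy (hxy : x < y)
  exact hcy.le.trans (ENNReal.div_le_div_right (hFG x hx y hxy) _)

end MMD

theorem stmt11_general {X : Type*} [PseudoMetricSpace X] [BoundedSpace X] [MeasurableSpace X]
    {T : X → X} (hT : Measurable T) (μ : Measure X) [IsProbabilityMeasure μ] :
    Filter.liminf (fun ε : ℝ => RDistL1 T μ ε / ENNReal.ofReal (Real.log (1 / ε)))
        (nhdsWithin 0 (Set.Ioi 0))
      ≤ Filter.liminf (fun ε : ℝ => infEntRate T μ ε / ENNReal.ofReal (Real.log (1 / ε)))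
        (nhdsWithin 0 (Set.Ioi 0)) := by
  refine liminf_nhdsGT_div_le (fun ε hε ε' hεε' => RDistL1_le_infEntRate hT hε.le hεε') ?_
    fun _ _ => ENNReal.ofReal_ne_top
  refine ENNReal.continuous_ofReal.comp_continuousOn (ContinuousOn.log ?_ ?_)
  · exact continuousOn_const.div continuousOn_id fun ε hε => ne_of_gt hε
  · exact fun ε hε => (one_div_pos.2 hε).ne'

/-- For every invariant Borel probability measure `μ`, the lower `L¹` rate distortion
dimension is bounded above by the lower Rényi information dimension. -/
theorem stmt11 {X : Type*} [MetricSpace X] [CompactSpace X] [MeasurableSpace X] [BorelSpace X]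
    (T : X → X) (hT : Continuous T)
    (μ : Measure X) (hμp : IsProbabilityMeasure μ) (hμinv : MeasurePreserving T μ μ) :
    Filter.liminf (fun ε : ℝ => RDistL1 T μ ε / ENNReal.ofReal (Real.log (1 / ε)))
        (nhdsWithin 0 (Set.Ioi 0))
      ≤ Filter.liminf (fun ε : ℝ => infEntRate T μ ε / ENNReal.ofReal (Real.log (1 / ε)))
        (nhdsWithin 0 (Set.Ioi 0)) :=
  stmt11_general hT.measurable μ
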